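/- Let $G$ be a group, $l \ge 1$, and let $a_1,\dots,a_{2l+1}$ be elements of $G$ satisfying the braid relations. Set $b_i = a_{i+1} a_i a_{i+1}^{-1}$ and $\phi_l = a_{2l+1}^{l+1} a_{2l-1}^{l} \cdots a_5^{3} a_3^{2} a_1$. Then for all finite sequences $D = (d_1,\dots,d_{k_1})$ and $E = (e_1,\dots,e_{k_2})$ of elements of $G$, the concatenated sequence $D \frown (a_{2l}, a_{2l-1}, \dots, a_2, a_1) \frown (a_{2l+1}, a_{2l}, \dots, a_2, a_1) \frown E$ is Hurwitz equivalent up to simultaneous conjugation to $(\phi_l d_1 \phi_l^{-1}, \dots, \phi_l d_{k_1} \phi_l^{-1}) \frown (a_{2l+1}, \dots, a_{2l+1}) \frown (a_{2l}, a_{2l-1}, \dots, a_2, a_1) \frown (b_{2l}, b_{2l-2}, \dots, b_4, b_2) \frown (\phi_l e_1 \phi_l^{-1}, \dots, \phi_l e_{k_2} \phi_l^{-1})$, where $a_{2l+1}$ is repeated $l+1$ times. -/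

import Mathlib

/-- One elementary (Hurwitz) transformation of sequences in a group. -/
def HurwitzStep {G : Type*} [Group G] (s t : List G) : Prop :=
  ∃ (l₁ l₂ : List G) (x y : G),
    (s = l₁ ++ x :: y :: l₂ ∧ t = l₁ ++ (x * y * x⁻¹) :: x :: l₂) ∨
    (s = l₁ ++ x :: y :: l₂ ∧ t = l₁ ++ y :: (y⁻¹ * x * y) :: l₂)

/-- One move of Hurwitz equivalence up to simultaneous conjugation. -/
def HurwitzStepC {G : Type*} [Group G] (s t : List G) : Prop :=
  HurwitzStep s t ∨ ∃ ψ : G, t = s.map fun w => ψ * w * ψ⁻¹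

/-- Hurwitz equivalence up to simultaneous conjugation. -/
def HurwitzEquivC {G : Type*} [Group G] : List G → List G → Prop :=
  Relation.ReflTransGen HurwitzStepC

/-- The sequence `a k, a (k-1), …, a m` (descending indices). -/
def seqDesc {G : Type*} (a : ℕ → G) (k m : ℕ) : List G :=
  (List.range (k + 1 - m)).map fun i => a (k - i)

/-- `φ l = a (2l+1) ^ (l+1) * a (2l-1) ^ l * ⋯ * a 5 ^ 3 * a 3 ^ 2 * a 1`. -/
def phiOdd {G : Type*} [Group G] (a : ℕ → G) (l : ℕ) : G :=
  ((List.range (l + 1)).map fun j => a (2 * (l - j) + 1) ^ (l - j + 1)).prod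

/-!
Everything is driven by one swap: the concatenation `L ⌢ M` is Hurwitz equivalent to `M ⌢ L'`, where
`L'` is `L` conjugated by the inverse of the product of `M`. Commuting blocks therefore swap
unchanged, and the braid relation `p q p = q p q` turns `(p, …, p, q, p)` into `(q, p, q, …, q)`.

The theorem is the case of empty `D` and `E` put in context, and this case follows by induction on
`l`. Write `p, q, r` for `a_{2l+1}, a_{2l+2}, a_{2l+3}`. Since `q` and `r` commute with
`a_1, …, a_{2l}`, the sequence for `l + 1` is equivalent to `(q, p, r, q)` followed by the sequence
for `l`. Conjugation by `φ_l` fixes `p` and `r` and turns `q` into `p^{l+1} q p^{-(l+1)}`, which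
becomes `q` again as the copies of `p` supplied by the induction hypothesis move left past it. The
braid relations then turn these copies of `p` into copies of `q` and further into copies of `r`,
which, after conjugation by `r^{l+2}`, move to the left in the same way.
-/

section

variable {G H : Type*} [Group G] [Group H]

/-- Hurwitz equivalence of sequences. The two kinds of `HurwitzStep` are mutually inverse, so no
symmetric closure is taken. -/
def HurwitzEquiv : List G → List G → Prop :=
  Relation.ReflTransGen HurwitzStep

local infix:50 " ∼ₕ " => HurwitzEquiv

theorem HurwitzStep.append_append {s t : List G} (h : HurwitzStep s t) (u v : List G) :
    HurwitzStep (u ++ s ++ v) (u ++ t ++ v) := by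
  obtain ⟨l₁, l₂, x, y, ⟨rfl, rfl⟩ | ⟨rfl, rfl⟩⟩ := h
  · exact ⟨u ++ l₁, l₂ ++ v, x, y, .inl ⟨by simp, by simp⟩⟩
  · exact ⟨u ++ l₁, l₂ ++ v, x, y, .inr ⟨by simp, by simp⟩⟩

theorem HurwitzStep.map {F : Type*} [FunLike F G H] [MonoidHomClass F G H] {s t : List G}
    (h : HurwitzStep s t) (f : F) :
    HurwitzStep (s.map f) (t.map f) := by
  obtain ⟨l₁, l₂, x, y, ⟨rfl, rfl⟩ | ⟨rfl, rfl⟩⟩ := h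
  · exact ⟨l₁.map f, l₂.map f, f x, f y, .inl ⟨by simp, by simp⟩⟩
  · exact ⟨l₁.map f, l₂.map f, f x, f y, .inr ⟨by simp, by simp⟩⟩

theorem map_conj_eq_self {c : G} {L : List G} (h : ∀ y ∈ L, Commute c y) :
    L.map (MulAut.conj c) = L :=
  (List.map_congr_left fun y hy => (h y hy).mul_inv_cancel).trans L.map_id

namespace HurwitzEquiv

theorem refl (s : List G) : s ∼ₕ s :=
  Relation.ReflTransGen.refl

theorem trans {s t u : List G} (h : s ∼ₕ t) (h' : t ∼ₕ u) : s ∼ₕ u :=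
  Relation.ReflTransGen.trans h h'

instance : Trans (HurwitzEquiv (G := G)) HurwitzEquiv HurwitzEquiv :=
  ⟨trans⟩

theorem append_append {s t : List G} (h : s ∼ₕ t) (u v : List G) : u ++ s ++ v ∼ₕ u ++ t ++ v :=
  Relation.ReflTransGen.lift (u ++ · ++ v) (fun _ _ hs => hs.append_append u v) _ _ h

theorem append_left (u : List G) {s t : List G} (h : s ∼ₕ t) : u ++ s ∼ₕ u ++ t := by
  simpa using h.append_append u []

theorem append_right {s t : List G} (h : s ∼ₕ t) (v : List G) : s ++ v ∼ₕ t ++ v :=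
  h.append_append [] v

theorem map {F : Type*} [FunLike F G H] [MonoidHomClass F G H] {s t : List G} (h : s ∼ₕ t) (f : F) :
    s.map f ∼ₕ t.map f :=
  Relation.ReflTransGen.lift (List.map f) (fun _ _ hs => hs.map f) _ _ h

theorem hurwitzEquivC_of_map_conj {s t : List G} {c : G} (h : s.map (MulAut.conj c) ∼ₕ t) :
    HurwitzEquivC s t :=
  .head (.inr ⟨c, rfl⟩) (Relation.ReflTransGen.mono (fun _ _ => .inl) _ _ h)

theorem conj_cons (x : G) (M : List G) : MulAut.conj M.prod x :: M ∼ₕ M ++ [x] := by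
  induction M with
  | nil => simpa using refl [x]
  | cons y M ih =>
    have swap : HurwitzStep (MulAut.conj (y :: M).prod x :: y :: M)
        (y :: MulAut.conj M.prod x :: M) :=
      ⟨[], M, _, y, .inr ⟨rfl, by simp [mul_assoc]⟩⟩
    exact .head swap (ih.append_left [y])

theorem map_conj_append (L M : List G) : L.map (MulAut.conj M.prod) ++ M ∼ₕ M ++ L := by
  induction L with
  | nil => simpa using refl M
  | cons x L ih =>
    calc (x :: L).map (MulAut.conj M.prod) ++ M
      _ ∼ₕ MulAut.conj M.prod x :: (M ++ L) := ih.append_left [_]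
      _ ∼ₕ M ++ [x] ++ L := (conj_cons x M).append_right L
      _ = M ++ x :: L := by simp

theorem append_comm {L M : List G} (h : ∀ x ∈ L, ∀ y ∈ M, Commute x y) : L ++ M ∼ₕ M ++ L := by
  have hL : L.map (MulAut.conj M.prod) = L :=
    map_conj_eq_self fun x hx => (Commute.list_prod_right M x (h x hx)).symm
  simpa only [hL] using map_conj_append L M

theorem conj_pow_cons_replicate (x y : G) (k : ℕ) :
    MulAut.conj (y ^ k) x :: List.replicate k y ∼ₕ List.replicate k y ++ [x] := by
  simpa only [List.prod_replicate] using conj_cons x (List.replicate k y)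

theorem replicate_append_of_braid {p q : G} (h : p * q * p = q * p * q) (k : ℕ) :
    List.replicate k p ++ [q, p] ∼ₕ [q, p] ++ List.replicate k q := by
  have hp : MulAut.conj [q, p].prod q = p := by
    rw [List.prod_pair, MulAut.conj_apply, mul_inv_eq_iff_eq_mul, ← h, mul_assoc]
  simpa only [List.map_replicate, hp] using map_conj_append (List.replicate k q) [q, p]

variable {p q r : G}

theorem conj_pow_block_append_replicate (hpq : p * q * p = q * p * q)
    (hqr : q * r * q = r * q * r) (hpr : Commute p r) (k : ℕ) :
    [MulAut.conj (p ^ k) q, p, r, MulAut.conj (p ^ k) q] ++ List.replicate k p ∼ₕ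
      [q, p, r, q] ++ List.replicate k r := by
  set x := MulAut.conj (p ^ k) q
  have hx : x :: List.replicate k p ∼ₕ List.replicate k p ++ [q] := conj_pow_cons_replicate q p k
  have hswap : [p, r] ++ List.replicate k p ∼ₕ List.replicate k p ++ [p, r] :=
    append_comm (by simp +contextual [hpr.symm])
  calc [x, p, r, x] ++ List.replicate k p
    _ ∼ₕ [x, p, r] ++ (List.replicate k p ++ [q]) := hx.append_left [x, p, r]
    _ ∼ₕ [x] ++ (List.replicate k p ++ [p, r]) ++ [q] := by
      simpa using hswap.append_append [x] [q]
    _ ∼ₕ List.replicate k p ++ [q, p] ++ [r, q] := by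
      simpa using hx.append_right [p, r, q]
    _ ∼ₕ [q, p] ++ (List.replicate k q ++ [r, q]) := by
      simpa using (replicate_append_of_braid hpq k).append_right [r, q]
    _ ∼ₕ [q, p, r, q] ++ List.replicate k r :=
      (replicate_append_of_braid hqr k).append_left [q, p]

theorem map_conj_pow_block_append_replicate (hpr : Commute p r) (k : ℕ) :
    ([q, p, r, q] ++ List.replicate k r).map (MulAut.conj (r ^ (k + 1))) ∼ₕ
      List.replicate (k + 1) r ++ [q, p, r * q * r⁻¹] := by
  set x := MulAut.conj (r ^ (k + 1)) q with hx
  have hmap : ([q, p, r, q] ++ List.replicate k r).map (MulAut.conj (r ^ (k + 1))) =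
      [x, p, r, x] ++ List.replicate k r := by
    have hp : MulAut.conj (r ^ (k + 1)) p = p := (hpr.symm.pow_left _).mul_inv_cancel
    have hr : MulAut.conj (r ^ (k + 1)) r = r := (Commute.pow_self r _).mul_inv_cancel
    simp only [List.map_append, List.map_cons, List.map_nil, List.map_replicate, hp, hr, hx]
  have hx' : x = MulAut.conj (r ^ k) (r * q * r⁻¹) := by
    rw [hx, pow_succ, map_mul, MulAut.mul_apply, MulAut.conj_apply r]
  have hswap : p :: List.replicate (k + 1) r ∼ₕ List.replicate (k + 1) r ++ [p] :=
    append_comm (L := [p]) (by simp [hpr])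
  calc ([q, p, r, q] ++ List.replicate k r).map (MulAut.conj (r ^ (k + 1)))
    _ = [x, p, r] ++ (x :: List.replicate k r) := hmap
    _ ∼ₕ [x, p, r] ++ (List.replicate k r ++ [r * q * r⁻¹]) :=
      (hx' ▸ conj_pow_cons_replicate (r * q * r⁻¹) r k).append_left _
    _ ∼ₕ [x] ++ (List.replicate (k + 1) r ++ [p]) ++ [r * q * r⁻¹] :=
      hswap.append_append [x] [r * q * r⁻¹]
    _ ∼ₕ List.replicate (k + 1) r ++ [q, p, r * q * r⁻¹] := by
      simpa [hx] using (conj_pow_cons_replicate q r (k + 1)).append_right [p, r * q * r⁻¹]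

theorem map_conj_pow_block_append (hpq : p * q * p = q * p * q) (hqr : q * r * q = r * q * r)
    (hpr : Commute p r) (k : ℕ) {A B : List G} (hqA : ∀ y ∈ A, Commute q y)
    (hrA : ∀ y ∈ A, Commute r y) (hrB : ∀ y ∈ B, Commute r y) :
    ([MulAut.conj (p ^ k) q, p, r, MulAut.conj (p ^ k) q] ++
        (List.replicate k p ++ A ++ B)).map (MulAut.conj (r ^ (k + 1))) ∼ₕ
      List.replicate (k + 1) r ++ (q :: p :: A) ++ (r * q * r⁻¹ :: B) := by
  set x := MulAut.conj (p ^ k) q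
  set c := MulAut.conj (r ^ (k + 1))
  have hfix : (A ++ B).map c = A ++ B :=
    map_conj_eq_self fun y hy => ((List.mem_append.1 hy).elim (hrA y) (hrB y)).pow_left _
  have hblock : ([x, p, r, x] ++ List.replicate k p).map c ∼ₕ
      List.replicate (k + 1) r ++ [q, p, r * q * r⁻¹] :=
    ((conj_pow_block_append_replicate hpq hqr hpr k).map c).trans
      (map_conj_pow_block_append_replicate hpr k)
  have hswap : r * q * r⁻¹ :: A ∼ₕ A ++ [r * q * r⁻¹] :=
    append_comm (L := [r * q * r⁻¹]) fun x hx y hy => by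
      rw [List.mem_singleton.1 hx]
      exact ((hrA y hy).mul_left (hqA y hy)).mul_left (hrA y hy).inv_left
  calc ([x, p, r, x] ++ (List.replicate k p ++ A ++ B)).map c
    _ = ([x, p, r, x] ++ List.replicate k p).map c ++ (A ++ B) := by
      rw [← hfix, ← List.map_append]
      simp only [List.append_assoc]
    _ ∼ₕ List.replicate (k + 1) r ++ [q, p, r * q * r⁻¹] ++ (A ++ B) := hblock.append_right _
    _ ∼ₕ List.replicate (k + 1) r ++ (q :: p :: A) ++ (r * q * r⁻¹ :: B) := by
      simpa using hswap.append_append (List.replicate (k + 1) r ++ [q, p]) B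

end HurwitzEquiv

theorem seqDesc_succ {α : Type*} (a : ℕ → α) (k : ℕ) :
    seqDesc a (k + 1) 1 = a (k + 1) :: seqDesc a k 1 := by
  simp [seqDesc, List.range_succ_eq_map, Function.comp_def]

theorem mem_seqDesc {α : Type*} {a : ℕ → α} {k : ℕ} {y : α} (h : y ∈ seqDesc a k 1) :
    ∃ i, 1 ≤ i ∧ i ≤ k ∧ a i = y := by
  simp only [seqDesc, List.mem_map, List.mem_range] at h
  obtain ⟨i, hi, rfl⟩ := h
  exact ⟨k - i, by omega, by omega, rfl⟩

/-- The sequence `b (2l), b (2l-2), …, b 2` where `b i = a (i+1) * a i * (a (i+1))⁻¹`. -/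
def seqConjEven (a : ℕ → G) (l : ℕ) : List G :=
  (List.range l).map fun j =>
    a (2 * l - 2 * j + 1) * a (2 * l - 2 * j) * (a (2 * l - 2 * j + 1))⁻¹

theorem seqConjEven_succ (a : ℕ → G) (l : ℕ) :
    seqConjEven a (l + 1) =
      (a (2 * l + 3) * a (2 * l + 2) * (a (2 * l + 3))⁻¹) :: seqConjEven a l := by
  simp [seqConjEven, List.range_succ_eq_map, Function.comp_def, mul_add]

theorem mem_seqConjEven {a : ℕ → G} {l : ℕ} {y : G} (h : y ∈ seqConjEven a l) :
    ∃ i, 1 ≤ i ∧ i ≤ 2 * l ∧ a (i + 1) * a i * (a (i + 1))⁻¹ = y := by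
  simp only [seqConjEven, List.mem_map, List.mem_range] at h
  obtain ⟨j, hj, rfl⟩ := h
  exact ⟨2 * l - 2 * j, by omega, by omega, rfl⟩

theorem phiOdd_succ (a : ℕ → G) (l : ℕ) :
    phiOdd a (l + 1) = a (2 * l + 3) ^ (l + 2) * phiOdd a l := by
  simp [phiOdd, List.range_succ_eq_map (n := l + 1), Function.comp_def, mul_add]

theorem commute_phiOdd {a : ℕ → G} {l : ℕ} {z : G}
    (h : ∀ j ≤ l, Commute (a (2 * j + 1)) z) : Commute (phiOdd a l) z := by
  refine Commute.list_prod_left _ _ fun x hx => ?_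
  simp only [List.mem_map, List.mem_range] at hx
  obtain ⟨j, -, rfl⟩ := hx
  exact (h _ (Nat.sub_le l j)).pow_left _

theorem conj_phiOdd {a : ℕ → G} {l : ℕ} {z : G} (h : ∀ j < l, Commute (a (2 * j + 1)) z) :
    MulAut.conj (phiOdd a l) z = MulAut.conj (a (2 * l + 1) ^ (l + 1)) z := by
  cases l with
  | zero => simp [phiOdd]
  | succ l =>
    have hz : MulAut.conj (phiOdd a l) z = z :=
      (commute_phiOdd fun j hj => h j (Nat.lt_succ_of_le hj)).mul_inv_cancel
    rw [phiOdd_succ, map_mul, MulAut.mul_apply, hz]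
    rfl

/-- The elements `a 1, …, a n` of a sequence indexed by `ℕ` satisfy the braid relations. -/
structure BraidRelations (a : ℕ → G) (n : ℕ) : Prop where
  braid : ∀ i, 1 ≤ i → i + 1 ≤ n → a i * a (i + 1) * a i = a (i + 1) * a i * a (i + 1)
  commute : ∀ i j, 1 ≤ i → j ≤ n → i + 2 ≤ j → Commute (a i) (a j)

namespace BraidRelations

variable {a : ℕ → G} {n : ℕ}

theorem mono (ha : BraidRelations a n) {m : ℕ} (hmn : m ≤ n) : BraidRelations a m where
  braid i hi hm := ha.braid i hi (hm.trans hmn)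
  commute i j hi hj := ha.commute i j hi (hj.trans hmn)

theorem commute_seqDesc (ha : BraidRelations a n) {j k : ℕ} (hkj : k + 2 ≤ j) (hj : j ≤ n) :
    ∀ y ∈ seqDesc a k 1, Commute (a j) y := by
  intro y hy
  obtain ⟨i, hi, hik, rfl⟩ := mem_seqDesc hy
  exact (ha.commute i j hi hj (by omega)).symm

theorem commute_seqConjEven (ha : BraidRelations a n) {j l : ℕ} (hlj : 2 * l + 3 ≤ j)
    (hj : j ≤ n) : ∀ y ∈ seqConjEven a l, Commute (a j) y := by
  intro y hy
  obtain ⟨i, hi, hil, rfl⟩ := mem_seqConjEven hy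
  have h₀ : Commute (a j) (a i) := (ha.commute i j hi hj (by omega)).symm
  have h₁ : Commute (a j) (a (i + 1)) := (ha.commute (i + 1) j (by omega) hj (by omega)).symm
  exact (h₁.mul_right h₀).mul_right h₁.inv_right

theorem seqDesc_append_seqDesc_succ (ha : BraidRelations a n) {m : ℕ} (hm : m + 3 ≤ n) :
    seqDesc a (m + 2) 1 ++ seqDesc a (m + 3) 1 ∼ₕ
      [a (m + 2), a (m + 1), a (m + 3), a (m + 2)] ++ (seqDesc a m 1 ++ seqDesc a (m + 1) 1) := by
  have hswap : seqDesc a m 1 ++ [a (m + 3), a (m + 2)] ∼ₕ [a (m + 3), a (m + 2)] ++ seqDesc a m 1 :=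
    .append_comm fun y hy => by
      simpa using ⟨(ha.commute_seqDesc (by omega) hm y hy).symm,
        (ha.commute_seqDesc le_rfl (by omega) y hy).symm⟩
  simpa [seqDesc_succ] using hswap.append_append [a (m + 2), a (m + 1)] (seqDesc a (m + 1) 1)

theorem map_conj_phiOdd_block {l : ℕ} (ha : BraidRelations a (2 * l + 3)) :
    [a (2 * l + 2), a (2 * l + 1), a (2 * l + 3), a (2 * l + 2)].map (MulAut.conj (phiOdd a l)) =
      [MulAut.conj (a (2 * l + 1) ^ (l + 1)) (a (2 * l + 2)), a (2 * l + 1), a (2 * l + 3),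
        MulAut.conj (a (2 * l + 1) ^ (l + 1)) (a (2 * l + 2))] := by
  have hp : MulAut.conj (phiOdd a l) (a (2 * l + 1)) = a (2 * l + 1) := by
    rw [conj_phiOdd fun j hj => ha.commute _ _ (by omega) (by omega) (by omega)]
    exact (Commute.pow_self _ _).mul_inv_cancel
  have hq : MulAut.conj (phiOdd a l) (a (2 * l + 2)) =
      MulAut.conj (a (2 * l + 1) ^ (l + 1)) (a (2 * l + 2)) :=
    conj_phiOdd fun j hj => ha.commute _ _ (by omega) (by omega) (by omega)
  have hr : MulAut.conj (phiOdd a l) (a (2 * l + 3)) = a (2 * l + 3) :=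
    (commute_phiOdd fun j hj => ha.commute _ _ (by omega) (by omega) (by omega)).mul_inv_cancel
  simp only [List.map_cons, List.map_nil, hp, hq, hr]

theorem map_conj_phiOdd_block_append {l : ℕ} (ha : BraidRelations a (2 * l + 3)) :
    ([a (2 * l + 2), a (2 * l + 1), a (2 * l + 3), a (2 * l + 2)].map (MulAut.conj (phiOdd a l)) ++
        (List.replicate (l + 1) (a (2 * l + 1)) ++ seqDesc a (2 * l) 1 ++ seqConjEven a l)).map
        (MulAut.conj (a (2 * l + 3) ^ (l + 2))) ∼ₕ
      List.replicate (l + 2) (a (2 * l + 3)) ++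
        (a (2 * l + 2) :: a (2 * l + 1) :: seqDesc a (2 * l) 1) ++
        (a (2 * l + 3) * a (2 * l + 2) * (a (2 * l + 3))⁻¹ :: seqConjEven a l) := by
  have hpq := ha.braid (2 * l + 1) (by omega) (by omega)
  have hqr := ha.braid (2 * l + 2) (by omega) (by omega)
  have hpr := ha.commute (2 * l + 1) (2 * l + 3) (by omega) le_rfl le_rfl
  have hqA := ha.commute_seqDesc (j := 2 * l + 2) (k := 2 * l) le_rfl (by omega)
  have hrA := ha.commute_seqDesc (j := 2 * l + 3) (k := 2 * l) (by omega) le_rfl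
  have hrB := ha.commute_seqConjEven (j := 2 * l + 3) (l := l) le_rfl le_rfl
  rw [map_conj_phiOdd_block ha]
  exact .map_conj_pow_block_append hpq hqr hpr (l + 1) hqA hrA hrB

theorem map_conj_phiOdd_seqDesc_append_seqDesc {l : ℕ} (ha : BraidRelations a (2 * l + 1)) :
    (seqDesc a (2 * l) 1 ++ seqDesc a (2 * l + 1) 1).map (MulAut.conj (phiOdd a l)) ∼ₕ
      List.replicate (l + 1) (a (2 * l + 1)) ++ seqDesc a (2 * l) 1 ++ seqConjEven a l := by
  induction l with
  | zero => simpa [seqDesc, phiOdd, seqConjEven] using HurwitzEquiv.refl [a 1]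
  | succ l ih =>
    set φ := phiOdd a l
    set ρ := a (2 * l + 3) ^ (l + 2)
    set S := seqDesc a (2 * l) 1 ++ seqDesc a (2 * l + 1) 1
    set block := [a (2 * l + 2), a (2 * l + 1), a (2 * l + 3), a (2 * l + 2)]
    have hconj (L : List G) : L.map (MulAut.conj (ρ * φ)) =
        (L.map (MulAut.conj φ)).map (MulAut.conj ρ) := by
      simp
    calc (seqDesc a (2 * (l + 1)) 1 ++ seqDesc a (2 * (l + 1) + 1) 1).map
          (MulAut.conj (phiOdd a (l + 1)))
      _ ∼ₕ (block ++ S).map (MulAut.conj (phiOdd a (l + 1))) :=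
        (ha.seqDesc_append_seqDesc_succ le_rfl).map _
      _ = (block.map (MulAut.conj φ) ++ S.map (MulAut.conj φ)).map (MulAut.conj ρ) := by
        rw [phiOdd_succ, hconj, List.map_append]
      _ ∼ₕ (block.map (MulAut.conj φ) ++ (List.replicate (l + 1) (a (2 * l + 1)) ++
          seqDesc a (2 * l) 1 ++ seqConjEven a l)).map (MulAut.conj ρ) :=
        ((ih (ha.mono (by omega))).append_left _).map _
      _ ∼ₕ List.replicate (l + 2) (a (2 * l + 3)) ++
          (a (2 * l + 2) :: a (2 * l + 1) :: seqDesc a (2 * l) 1) ++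
          (a (2 * l + 3) * a (2 * l + 2) * (a (2 * l + 3))⁻¹ :: seqConjEven a l) :=
        map_conj_phiOdd_block_append ha
      _ = List.replicate (l + 1 + 1) (a (2 * (l + 1) + 1)) ++ seqDesc a (2 * (l + 1)) 1 ++
          seqConjEven a (l + 1) := by
        rw [mul_add, seqDesc_succ, seqDesc_succ, seqConjEven_succ]

end BraidRelations

end

/-- Lemma 4.2(a) of the paper: with `b i = a (i+1) * a i * (a (i+1))⁻¹`,
`D ⌢ (a (2l), …, a 1) ⌢ (a (2l+1), …, a 1) ⌢ E` is Hurwitz equivalent up to simultaneous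
conjugation to
`φ D φ⁻¹ ⌢ (a (2l+1))^{l+1} ⌢ (a (2l), …, a 1) ⌢ (b (2l), b (2l-2), …, b 2) ⌢ φ E φ⁻¹`. -/
theorem statement5 {G : Type*} [Group G] (l : ℕ) (hl : 1 ≤ l) (a : ℕ → G)
    (hbraid : ∀ i, 1 ≤ i → i + 1 ≤ 2 * l + 1 →
      a i * a (i + 1) * a i = a (i + 1) * a i * a (i + 1))
    (hcomm : ∀ i j, 1 ≤ i → j ≤ 2 * l + 1 → i + 2 ≤ j → a i * a j = a j * a i)
    (D E : List G) :
    HurwitzEquivC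
      (D ++ seqDesc a (2 * l) 1 ++ seqDesc a (2 * l + 1) 1 ++ E)
      ((D.map fun d => phiOdd a l * d * (phiOdd a l)⁻¹) ++
        List.replicate (l + 1) (a (2 * l + 1)) ++
        seqDesc a (2 * l) 1 ++
        ((List.range l).map fun j =>
          a (2 * l - 2 * j + 1) * a (2 * l - 2 * j) * (a (2 * l - 2 * j + 1))⁻¹) ++
        (E.map fun e => phiOdd a l * e * (phiOdd a l)⁻¹)) := by
  have ha : BraidRelations a (2 * l + 1) := ⟨hbraid, hcomm⟩
  have hcore := ha.map_conj_phiOdd_seqDesc_append_seqDesc.append_append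
    (D.map (MulAut.conj (phiOdd a l))) (E.map (MulAut.conj (phiOdd a l)))
  have hconj (L : List G) :
      L.map (MulAut.conj (phiOdd a l)) = L.map fun w => phiOdd a l * w * (phiOdd a l)⁻¹ := rfl
  refine HurwitzEquiv.hurwitzEquivC_of_map_conj (c := phiOdd a l) ?_
  simpa only [hconj, List.map_append, List.append_assoc, seqConjEven] using hcore
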